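/- In the exact WKB setup with Ω additionally simply connected, fix x₀, x₁ ∈ Ω and ε > 0. Let (p_even, p_odd) be the unique (+1)-transport pair with p_even(x₀) = 1 and p_odd(x₀) = 0; let (q_even, q_odd) be the unique (−1)-transport pair with q_even(x₁) = 1 and q_odd(x₁) = 0; and let (r_even, r_odd) be the unique (+1)-transport pair with r_even(x₁) = 1 and r_odd(x₁) = 0. Let v⁺, v⁻, ṽ⁺ be the exact WKB functions associated to (p_even,p_odd) with κ = +1, to (q_even,q_odd) with κ = −1, and to (r_even,r_odd) with κ = +1, respectively. Then the Wronskians are constant on Ω and satisfy, for all x ∈ Ω: v⁺₁(x)·v⁻₂(x) − v⁺₂(x)·v⁻₁(x) = 2i·p_even(x₁) and v⁺₁(x)·ṽ⁺₂(x) − v⁺₂(x)·ṽ⁺₁(x) = −2i·e^{2z(x₁)/ε}·p_odd(x₁). (This is the Wronskian formula for exact WKB solutions with different base points for the symbol, stated at the level of the reduced Zakharov–Shabat system.) -/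

import Mathlib

/-!
For symbols `(pe, po)` and `(qe, qo)` with opposite signs `κ` and `-κ`, the damping terms of the
transport equations cancel in the derivative of `pe * qe - po * qo`, which is therefore constant.
For equal signs, `exp (2κz/ε)` is an integrating factor that makes
`exp (2κz/ε) * (po * qe - pe * qo)` constant. Up to the factors `2iκ` and `-2iκ`, these are the
Wronskians of the corresponding exact WKB functions, so both can be read off at any base point.
-/

open Complex Filter Set

noncomputable section

/-- The exact WKB setup on an open set `Ω ⊆ ℂ` free of turning points:
`g₊, g₋, φ, H, z` are holomorphic on `Ω`, `φ` and `H` nowhere vanish on `Ω`,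
`φ² = −g₊·g₋`, `g₊·H² = i·φ` and `z' = i·φ`. -/
structure WKBSetup (Ω : Set ℂ) (gp gm φ Hf zf : ℂ → ℂ) : Prop where
  open_Ω : IsOpen Ω
  diff_gp : DifferentiableOn ℂ gp Ω
  diff_gm : DifferentiableOn ℂ gm Ω
  diff_φ : DifferentiableOn ℂ φ Ω
  diff_H : DifferentiableOn ℂ Hf Ω
  diff_z : DifferentiableOn ℂ zf Ω
  φ_ne : ∀ x ∈ Ω, φ x ≠ 0
  H_ne : ∀ x ∈ Ω, Hf x ≠ 0
  φ_sq : ∀ x ∈ Ω, φ x ^ 2 = -(gp x * gm x)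
  H_sq : ∀ x ∈ Ω, gp x * Hf x ^ 2 = Complex.I * φ x
  z_deriv : ∀ x ∈ Ω, deriv zf x = Complex.I * φ x

/-- A `κ`-transport pair `(w_even, w_odd)` on `Ω`:
`w_even' = (H'/H)·w_odd` and `w_odd' + κ(2/ε)·z'·w_odd = (H'/H)·w_even`. -/
def TransportPair (Ω : Set ℂ) (Hf zf : ℂ → ℂ) (ε : ℝ) (κ : ℂ)
    (we wo : ℂ → ℂ) : Prop :=
  DifferentiableOn ℂ we Ω ∧ DifferentiableOn ℂ wo Ω ∧
  (∀ x ∈ Ω, deriv we x = deriv Hf x / Hf x * wo x) ∧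
  (∀ x ∈ Ω, deriv wo x + κ * (2 / (ε : ℂ)) * deriv zf x * wo x =
    deriv Hf x / Hf x * we x)

/-- The Wronskian `f₁ g₂ - f₂ g₁` of two `ℂ²`-valued functions. -/
def wronskian (f g : ℂ → ℂ × ℂ) (x : ℂ) : ℂ :=
  (f x).1 * (g x).2 - (f x).2 * (g x).1

/-- The exact WKB function `(v₁, v₂)` built from the symbol `(we, wo)`. It solves the reduced
Zakharov–Shabat system for `κ = ±1`, but `κ` may be any complex number here. -/
def wkbFunction (Hf zf : ℂ → ℂ) (ε : ℝ) (κ : ℂ) (we wo : ℂ → ℂ) (x : ℂ) : ℂ × ℂ :=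
  (exp (κ * zf x / ε) * (Hf x)⁻¹ * (we x + wo x),
    -κ * I * exp (κ * zf x / ε) * Hf x * (we x - wo x))

theorem wronskian_wkbFunction {Hf : ℂ → ℂ} {x : ℂ} (hH : Hf x ≠ 0) (zf : ℂ → ℂ) (ε : ℝ)
    (κ₁ κ₂ : ℂ) (pe po qe qo : ℂ → ℂ) :
    wronskian (wkbFunction Hf zf ε κ₁ pe po) (wkbFunction Hf zf ε κ₂ qe qo) x =
      I * exp ((κ₁ + κ₂) * zf x / ε) *
        (κ₁ * (pe x - po x) * (qe x + qo x) - κ₂ * (pe x + po x) * (qe x - qo x)) := by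
  rw [add_mul, add_div, exp_add]
  simp only [wronskian, wkbFunction]
  field_simp
  ring

theorem eq_of_hasDerivAt_zero {𝕜 E : Type*} [RCLike 𝕜] [NormedAddCommGroup E] [NormedSpace 𝕜 E]
    {f : 𝕜 → E} {s : Set 𝕜} (hs : IsOpen s) (hs' : IsPreconnected s)
    (hf : ∀ x ∈ s, HasDerivAt f 0 x) {x y : 𝕜} (hx : x ∈ s) (hy : y ∈ s) : f x = f y :=
  hs.is_const_of_deriv_eq_zero hs'
    (fun w hw ↦ (hf w hw).differentiableAt.differentiableWithinAt)
    (fun w hw ↦ (hf w hw).deriv) hx hy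

namespace TransportPair

variable {Ω : Set ℂ} {Hf zf : ℂ → ℂ} {ε : ℝ} {κ : ℂ} {pe po qe qo : ℂ → ℂ} {x y : ℂ}

theorem hasDerivAt_even (hp : TransportPair Ω Hf zf ε κ pe po) (hΩ : IsOpen Ω) (hx : x ∈ Ω) :
    HasDerivAt pe (deriv Hf x / Hf x * po x) x := by
  obtain ⟨hpe, -, hpe', -⟩ := hp
  rw [← hpe' x hx]
  exact (hpe.differentiableAt (hΩ.mem_nhds hx)).hasDerivAt

theorem hasDerivAt_odd (hp : TransportPair Ω Hf zf ε κ pe po) (hΩ : IsOpen Ω) (hx : x ∈ Ω) :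
    HasDerivAt po (deriv Hf x / Hf x * pe x - κ * (2 / ε) * deriv zf x * po x) x := by
  obtain ⟨-, hpo, -, hpo'⟩ := hp
  rw [← eq_sub_of_add_eq (hpo' x hx)]
  exact (hpo.differentiableAt (hΩ.mem_nhds hx)).hasDerivAt

theorem hasDerivAt_even_mul_even_sub_odd_mul_odd
    (hp : TransportPair Ω Hf zf ε κ pe po) (hq : TransportPair Ω Hf zf ε (-κ) qe qo)
    (hΩ : IsOpen Ω) (hx : x ∈ Ω) :
    HasDerivAt (fun w ↦ pe w * qe w - po w * qo w) 0 x := by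
  have h_even := (hp.hasDerivAt_even hΩ hx).mul (hq.hasDerivAt_even hΩ hx)
  have h_odd := (hp.hasDerivAt_odd hΩ hx).mul (hq.hasDerivAt_odd hΩ hx)
  exact (h_even.sub h_odd).congr_deriv (by ring)

theorem hasDerivAt_exp_mul_odd_mul_even_sub_even_mul_odd
    (hp : TransportPair Ω Hf zf ε κ pe po) (hq : TransportPair Ω Hf zf ε κ qe qo)
    (hΩ : IsOpen Ω) (hz : DifferentiableOn ℂ zf Ω) (hx : x ∈ Ω) :
    HasDerivAt (fun w ↦ exp (2 * κ * zf w / ε) * (po w * qe w - pe w * qo w)) 0 x := by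
  have h_exp : HasDerivAt (fun w ↦ exp (2 * κ * zf w / ε))
      (exp (2 * κ * zf x / ε) * (2 * κ * deriv zf x / ε)) x :=
    (((hz.differentiableAt (hΩ.mem_nhds hx)).hasDerivAt.const_mul (2 * κ)).div_const (ε : ℂ)).cexp
  have h_oe := (hp.hasDerivAt_odd hΩ hx).mul (hq.hasDerivAt_even hΩ hx)
  have h_eo := (hp.hasDerivAt_even hΩ hx).mul (hq.hasDerivAt_odd hΩ hx)
  refine (h_exp.mul (h_oe.sub h_eo)).congr_deriv ?_
  simp only [Pi.mul_apply, Pi.sub_apply]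
  ring

theorem wronskian_wkbFunction_neg
    (hp : TransportPair Ω Hf zf ε κ pe po) (hq : TransportPair Ω Hf zf ε (-κ) qe qo)
    (hΩ : IsOpen Ω) (hΩ' : IsPreconnected Ω) (hx : x ∈ Ω) (hH : Hf x ≠ 0) (hy : y ∈ Ω) :
    wronskian (wkbFunction Hf zf ε κ pe po) (wkbFunction Hf zf ε (-κ) qe qo) x =
      2 * I * κ * (pe y * qe y - po y * qo y) := by
  have h_const : pe x * qe x - po x * qo x = pe y * qe y - po y * qo y :=
    eq_of_hasDerivAt_zero hΩ hΩ'
      (fun _ ↦ hp.hasDerivAt_even_mul_even_sub_odd_mul_odd hq hΩ) hx hy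
  rw [wronskian_wkbFunction hH, add_neg_cancel, zero_mul, zero_div, exp_zero, ← h_const]
  ring

theorem wronskian_wkbFunction_self
    (hp : TransportPair Ω Hf zf ε κ pe po) (hq : TransportPair Ω Hf zf ε κ qe qo)
    (hΩ : IsOpen Ω) (hΩ' : IsPreconnected Ω) (hz : DifferentiableOn ℂ zf Ω)
    (hx : x ∈ Ω) (hH : Hf x ≠ 0) (hy : y ∈ Ω) :
    wronskian (wkbFunction Hf zf ε κ pe po) (wkbFunction Hf zf ε κ qe qo) x =
      -2 * I * κ * exp (2 * κ * zf y / ε) * (po y * qe y - pe y * qo y) := by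
  have h_const : exp (2 * κ * zf x / ε) * (po x * qe x - pe x * qo x) =
      exp (2 * κ * zf y / ε) * (po y * qe y - pe y * qo y) :=
    eq_of_hasDerivAt_zero hΩ hΩ'
      (fun _ ↦ hp.hasDerivAt_exp_mul_odd_mul_even_sub_even_mul_odd hq hΩ hz) hx hy
  rw [wronskian_wkbFunction hH, ← two_mul, mul_assoc (-2 * I * κ), ← h_const]
  ring

end TransportPair

theorem exact_wkb_wronskian_formula_general {Ω : Set ℂ} {Hf zf : ℂ → ℂ}
    (hΩ : IsOpen Ω) (hΩ' : IsPreconnected Ω)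
    (hH : DifferentiableOn ℂ Hf Ω) (hH₀ : ∀ x ∈ Ω, Hf x ≠ 0) (hz : DifferentiableOn ℂ zf Ω)
    {ε : ℝ} (hε : ε ≠ 0) {κ : ℂ} {pe po qe qo re ro : ℂ → ℂ}
    (hp : TransportPair Ω Hf zf ε κ pe po) (hq : TransportPair Ω Hf zf ε (-κ) qe qo)
    (hr : TransportPair Ω Hf zf ε κ re ro) {y : ℂ} (hy : y ∈ Ω) :
    ∀ x ∈ Ω,
      wronskian (wkbFunction Hf zf ε κ pe po) (wkbFunction Hf zf ε (-κ) qe qo) x =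
        2 * I * κ * (pe y * qe y - po y * qo y) ∧
      wronskian (wkbFunction Hf zf ε κ pe po) (wkbFunction Hf zf ε κ re ro) x =
        -2 * I * κ * exp (2 * κ * zf y / ε) * (po y * re y - pe y * ro y) :=
  fun x hx ↦ ⟨hp.wronskian_wkbFunction_neg hq hΩ hΩ' hx (hH₀ x hx) hy,
    hp.wronskian_wkbFunction_self hr hΩ hΩ' hz hx (hH₀ x hx) hy⟩

/-- The Wronskian formulas for exact WKB solutions with different base points
for the symbol: with `v⁺` built from the `(+1)`-transport pair based at `x₀`,
`v⁻` from the `(−1)`-pair based at `x₁` and `ṽ⁺` from the `(+1)`-pair based at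
`x₁`, the Wronskians are constant on `Ω` and
`W[v⁺,v⁻] = 2i·p_even(x₁)`, `W[v⁺,ṽ⁺] = −2i·e^{2z(x₁)/ε}·p_odd(x₁)`. -/
theorem exact_wkb_wronskian_formula
    (Ω : Set ℂ) (gp gm φ Hf zf : ℂ → ℂ) (hsetup : WKBSetup Ω gp gm φ Hf zf)
    (hΩsc : SimplyConnectedSpace Ω)
    (x₀ x₁ : ℂ) (hx₀ : x₀ ∈ Ω) (hx₁ : x₁ ∈ Ω)
    (ε : ℝ) (hε : 0 < ε)
    (pe po : ℂ → ℂ) (hp : TransportPair Ω Hf zf ε 1 pe po)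
    (hpe : pe x₀ = 1) (hpo : po x₀ = 0)
    (qe qo : ℂ → ℂ) (hq : TransportPair Ω Hf zf ε (-1) qe qo)
    (hqe : qe x₁ = 1) (hqo : qo x₁ = 0)
    (re ro : ℂ → ℂ) (hr : TransportPair Ω Hf zf ε 1 re ro)
    (hre : re x₁ = 1) (hro : ro x₁ = 0) :
    ∀ x ∈ Ω,
      (Complex.exp (zf x / ε) * (Hf x)⁻¹ * (pe x + po x)) *
          (Complex.I * Complex.exp (-zf x / ε) * Hf x * (qe x - qo x)) -
        (-Complex.I * Complex.exp (zf x / ε) * Hf x * (pe x - po x)) *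
          (Complex.exp (-zf x / ε) * (Hf x)⁻¹ * (qe x + qo x)) =
        2 * Complex.I * pe x₁ ∧
      (Complex.exp (zf x / ε) * (Hf x)⁻¹ * (pe x + po x)) *
          (-Complex.I * Complex.exp (zf x / ε) * Hf x * (re x - ro x)) -
        (-Complex.I * Complex.exp (zf x / ε) * Hf x * (pe x - po x)) *
          (Complex.exp (zf x / ε) * (Hf x)⁻¹ * (re x + ro x)) =
        -2 * Complex.I * Complex.exp (2 * zf x₁ / ε) * po x₁ := by
  simpa [wronskian, wkbFunction, hqe, hqo, hre, hro] using
    exact_wkb_wronskian_formula_general hsetup.open_Ω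
      (isPreconnected_iff_preconnectedSpace.mpr inferInstance) hsetup.diff_H hsetup.H_ne
      hsetup.diff_z hε.ne' hp hq hr hx₁

end
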